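/- arXiv:2306.11940 — 2 statements merged into one kernel-verified Lean document; each statement's English description precedes it below -/
import Mathlib

section
/- Let G be a finite abelian group and d ≥ 1 an integer. Then there is an isomorphism of abelian groups Hmg^d(G, ℚ/ℤ) ≅ ⊕_{p | |G|} Hmg^d(G_p, ℚ/ℤ)^{q(G/G_p)}, where the sum runs over primes p dividing the order of G, G_p denotes the p-Sylow subgroup of G, q(G/G_p) denotes the number of cyclic subgroups of the quotient group G/G_p, and the exponent denotes a direct sum of q(G/G_p) copies. -/
open scoped DirectSum

noncomputable section

/-- `ℚ/ℤ`, the quotient of the rationals by the integers. -/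
abbrev QZ : Type := AddCircle (1 : ℚ)

/-- The group of homogeneous functions of degree `d` from `G` to `H`, i.e. functions `f` with
`f (n • x) = n ^ d • f x` for every `x : G` and every integer `n` coprime to the order of `x`,
as an additive subgroup of `G → H` under pointwise addition. -/
def Hmg (d : ℕ) (G H : Type*) [AddCommGroup G] [AddCommGroup H] : AddSubgroup (G → H) where
  carrier := {f | ∀ (x : G) (n : ℤ), IsCoprime n (addOrderOf x : ℤ) → f (n • x) = n ^ d • f x}
  zero_mem' := by intro x n _; simp
  add_mem' := by
    intro f g hf hg x n h
    simp only [Pi.add_apply, hf x n h, hg x n h, smul_add]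
  neg_mem' := by
    intro f hf x n h
    simp only [Pi.neg_apply, hf x n h, smul_neg]

/-- The `p`-primary component (the Sylow `p`-subgroup, for `p` prime and `G` finite)
of an abelian group `G`: the elements killed by a power of `p`. -/
def primaryPart (p : ℕ) (G : Type*) [AddCommGroup G] : AddSubgroup G where
  carrier := {x | ∃ n : ℕ, p ^ n • x = 0}
  zero_mem' := ⟨0, by simp⟩
  add_mem' := by
    rintro a b ⟨m, hm⟩ ⟨n, hn⟩
    refine ⟨m + n, ?_⟩
    have ha : p ^ (m + n) • a = 0 := by rw [pow_add, mul_comm, mul_smul, hm, smul_zero]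
    have hb : p ^ (m + n) • b = 0 := by rw [pow_add, mul_smul, hn, smul_zero]
    rw [smul_add, ha, hb, add_zero]
  neg_mem' := by
    rintro a ⟨m, hm⟩
    exact ⟨m, by rw [smul_neg, hm, neg_zero]⟩

/-- The number of cyclic subgroups of an abelian group `A`. -/
def numCyclic (A : Type*) [AddGroup A] : ℕ :=
  Nat.card {C : AddSubgroup A // IsAddCyclic C}

/-- The values fixed by `n ^ d` for all integers `n` congruent to `1` modulo `m`. -/
def VV (d : ℕ) (A : Type*) [AddCommGroup A] (m : ℕ) : AddSubgroup A where
  carrier := {v | ∀ n : ℤ, (m : ℤ) ∣ n - 1 → n ^ d • v = v}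
  zero_mem' := by intro n _; simp
  add_mem' := by
    intro a b ha hb n hn
    rw [smul_add, ha n hn, hb n hn]
  neg_mem' := by
    intro a ha n hn
    rw [smul_neg, ha n hn]

theorem VV_mono {d : ℕ} {A : Type*} [AddCommGroup A] {m k : ℕ} (h : m ∣ k) {v : A}
    (hv : v ∈ VV d A m) : v ∈ VV d A k := by
  intro n hn
  exact hv n ((Int.natCast_dvd_natCast.mpr h).trans hn)

theorem VV_finite {d : ℕ} (hd : 1 ≤ d) {A : Type*} [AddCommGroup A] {m : ℕ} (hm : m ≠ 0) {v : A}
    (hv : v ∈ VV d A m) : addOrderOf v ≠ 0 := by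
  have h := hv ((m : ℤ) + 1) (by simp)
  have h2 : ((m + 1) ^ d - 1) • v = 0 := by
    have h3 : ((m + 1) ^ d) • v = v := by
      have : (((m + 1) ^ d : ℕ) : ℤ) • v = v := by push_cast; exact h
      rwa [natCast_zsmul] at this
    have h4 : (m + 1) ^ d = ((m + 1) ^ d - 1) + 1 := by
      have : 0 < (m + 1) ^ d := by positivity
      omega
    rw [h4, add_smul, one_smul] at h3
    simpa using h3
  have h5 : 0 < (m + 1) ^ d - 1 := by
    have : 1 < (m + 1) ^ d := Nat.one_lt_pow (by omega) (by omega)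
    omega
  intro h0
  have := addOrderOf_dvd_of_nsmul_eq_zero h2
  rw [h0] at this
  have := Nat.eq_zero_of_zero_dvd this
  omega

theorem VV_prime {d : ℕ} (hd : 1 ≤ d) {A : Type*} [AddCommGroup A] {m : ℕ} (hm : m ≠ 0) {v : A}
    (hv : v ∈ VV d A m) {q : ℕ} (hq : q.Prime) (hqv : q ∣ addOrderOf v) : q ∣ m := by
  by_contra hqm
  have hco : IsCoprime (q : ℤ) (m : ℤ) :=
    Nat.isCoprime_iff_coprime.mpr ((Nat.Prime.coprime_iff_not_dvd hq).mpr hqm)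
  obtain ⟨a, b, hab⟩ := hco
  have h := hv (a * q) ⟨-b, by linarith⟩
  obtain ⟨r, hr⟩ := hqv
  have h0 : addOrderOf v ≠ 0 := VV_finite hd hm hv
  obtain ⟨e, rfl⟩ : ∃ e, d = e + 1 := ⟨d - 1, by omega⟩
  have hrv : (r : ℤ) • v = 0 := by
    have h1 : ((r : ℤ) * (a * q) ^ (e + 1)) • v = (r : ℤ) • v := by
      rw [mul_smul, h]
    rw [← h1, show (r : ℤ) * (a * q) ^ (e + 1) = ((a * q) ^ e * a) * ((q * r : ℕ) : ℤ) by
      push_cast; ring, mul_smul, ← hr, natCast_zsmul, addOrderOf_nsmul_eq_zero, smul_zero]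
  rw [natCast_zsmul] at hrv
  have h2 := addOrderOf_dvd_of_nsmul_eq_zero hrv
  rw [hr] at h2 h0
  have hr0 : 0 < r := Nat.pos_of_ne_zero (by rintro rfl; simp at h0)
  have := Nat.le_of_dvd hr0 h2
  have := hq.two_le
  nlinarith

theorem VV_disj {d : ℕ} (hd : 1 ≤ d) {A : Type*} [AddCommGroup A] {m k : ℕ} (hm : m ≠ 0)
    (hk : k ≠ 0) (hmk : m.Coprime k) {v : A} (hv : v ∈ VV d A m) (hv' : v ∈ VV d A k) : v = 0 := by
  rw [← AddMonoid.addOrderOf_eq_one_iff]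
  by_contra h1
  obtain ⟨q, hq, hqv⟩ := Nat.exists_prime_and_dvd h1
  exact Nat.not_coprime_of_dvd_of_dvd hq.one_lt (VV_prime hd hm hv hq hqv)
    (VV_prime hd hk hv' hq hqv) hmk

theorem VV_half {d : ℕ} {A : Type*} [AddCommGroup A] {m k : ℕ} (hmk : m.Coprime k) {v : A}
    (hv : v ∈ VV d A (m * k)) (K : ℕ) (hK : (m : ℤ) ^ K • v = 0) : v ∈ VV d A m := by
  intro n hn
  have hco : IsCoprime ((m : ℤ) ^ (K + 1)) (k : ℤ) :=
    (Nat.isCoprime_iff_coprime.mpr hmk).pow_left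
  obtain ⟨a, b, hab⟩ := hco
  -- the integer congruent to `n` modulo `m ^ (K + 1)` and to `1` modulo `k`
  have key : ∃ n' : ℤ, (m : ℤ) ^ (K + 1) ∣ n - n' ∧ (k : ℤ) ∣ n' - 1 := by
    refine ⟨n * (b * k) + a * m ^ (K + 1), ⟨a * (n - 1), ?_⟩, ⟨b * (n - 1), ?_⟩⟩
    · linear_combination (-n) * hab
    · linear_combination hab
  obtain ⟨n', h1, h2⟩ := key
  have h3 : (m : ℤ) ∣ n' - 1 := by
    have : (m : ℤ) ∣ n - n' := (dvd_pow_self _ (by omega)).trans h1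
    have := dvd_sub hn this
    simpa using this
  have h4 : n' ^ d • v = v := hv n' (by
    push_cast
    exact (Nat.isCoprime_iff_coprime.mpr hmk).mul_dvd h3 h2)
  obtain ⟨c, hc⟩ := h1.trans (sub_dvd_pow_sub_pow n n' d)
  have h5 : n ^ d = n' ^ d + (c * m) * m ^ K := by
    rw [← sub_eq_iff_eq_add', hc]; ring
  rw [h5, add_smul, h4, mul_smul, hK, smul_zero, add_zero]

theorem VV_split {d : ℕ} (hd : 1 ≤ d) {A : Type*} [AddCommGroup A] {m k : ℕ} (hm : m ≠ 0)
    (hk : k ≠ 0) (hmk : m.Coprime k) {v : A} (hv : v ∈ VV d A (m * k)) :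
    ∃ a ∈ VV d A m, ∃ b ∈ VV d A k, a + b = v := by
  have hmk0 : m * k ≠ 0 := mul_ne_zero hm hk
  have h0 := VV_finite hd hmk0 hv
  obtain ⟨K, hK⟩ : ∃ K, addOrderOf v ∣ (m * k) ^ K := by
    rw [Nat.exists_dvd_pow_iff h0 hmk0]
    intro q hq
    rw [Nat.mem_primeFactors] at hq ⊢
    exact ⟨hq.1, VV_prime hd hmk0 hv hq.1 hq.2.1, hmk0⟩
  have hz : (((m : ℤ) ^ K) * (k : ℤ) ^ K) • v = 0 := by
    have := addOrderOf_dvd_iff_nsmul_eq_zero.mp hK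
    rw [← natCast_zsmul] at this
    rw [← mul_pow]
    push_cast at this
    exact this
  have hco : IsCoprime ((m : ℤ) ^ K) ((k : ℤ) ^ K) :=
    (Nat.isCoprime_iff_coprime.mpr hmk).pow
  obtain ⟨a, b, hab⟩ := hco
  refine ⟨(b * (k : ℤ) ^ K) • v, VV_half hmk (AddSubgroup.zsmul_mem _ hv _) K ?_,
    (a * (m : ℤ) ^ K) • v, VV_half hmk.symm (AddSubgroup.zsmul_mem _ (mul_comm m k ▸ hv) _) K ?_, ?_⟩
  · rw [smul_smul, show (m : ℤ) ^ K * (b * (k : ℤ) ^ K) = b * ((m : ℤ) ^ K * (k : ℤ) ^ K) by ring,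
      mul_smul, hz, smul_zero]
  · rw [smul_smul, show (k : ℤ) ^ K * (a * (m : ℤ) ^ K) = a * ((m : ℤ) ^ K * (k : ℤ) ^ K) by ring,
      mul_smul, hz, smul_zero]
  · rw [← add_smul, add_comm, hab, one_smul]

theorem VV_sum_surj {d : ℕ} (hd : 1 ≤ d) {A : Type*} [AddCommGroup A] {ι : Type*}
    (a : ι → ℕ) (S : Finset ι) (ha : ∀ i, a i ≠ 0)
    (hco : ∀ i j, i ≠ j → (a i).Coprime (a j)) :
    ∀ v ∈ VV d A (∏ i ∈ S, a i), ∃ w : ∀ i, VV d A (a i), ∑ i ∈ S, (w i : A) = v := by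
  classical
  induction S using Finset.induction_on with
  | empty =>
    intro v hv
    refine ⟨0, ?_⟩
    have := hv 0 (by simp)
    rw [zero_pow (by omega), zero_smul] at this
    simpa using this
  | insert i S hi ih =>
    intro v hv
    rw [Finset.prod_insert hi] at hv
    obtain ⟨x, hx, y, hy, rfl⟩ := VV_split hd (ha i) (Finset.prod_ne_zero_iff.mpr fun j _ => ha j)
      (Nat.Coprime.prod_right fun j hj => hco i j (by rintro rfl; exact hi hj)) hv
    obtain ⟨w, hw⟩ := ih y hy
    refine ⟨Function.update w i ⟨x, hx⟩, ?_⟩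
    rw [Finset.sum_insert hi, ← hw]
    simp only [Function.update_self]
    congr 1
    refine Finset.sum_congr rfl fun j hj => ?_
    rw [Function.update_of_ne]
    rintro rfl; exact hi hj

theorem VV_sum_mem {d : ℕ} {A : Type*} [AddCommGroup A] {ι : Type*}
    (a : ι → ℕ) (S : Finset ι) (w : ∀ i, VV d A (a i)) :
    ∑ i ∈ S, (w i : A) ∈ VV d A (∏ i ∈ S, a i) :=
  AddSubgroup.sum_mem _ fun i hi => VV_mono (Finset.dvd_prod_of_mem a hi) (w i).2

theorem VV_sum_inj {d : ℕ} (hd : 1 ≤ d) {A : Type*} [AddCommGroup A] {ι : Type*}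
    (a : ι → ℕ) (S : Finset ι) (ha : ∀ i, a i ≠ 0)
    (hco : ∀ i j, i ≠ j → (a i).Coprime (a j)) (w : ∀ i, VV d A (a i))
    (hw : ∑ i ∈ S, (w i : A) = 0) (i : ι) (hi : i ∈ S) : w i = 0 := by
  classical
  rw [← Finset.add_sum_erase S _ hi] at hw
  have h1 : (w i : A) = - ∑ j ∈ S.erase i, (w j : A) := eq_neg_of_add_eq_zero_left hw
  have h2 : (w i : A) ∈ VV d A (∏ j ∈ S.erase i, a j) := by
    rw [h1]; exact AddSubgroup.neg_mem _ (VV_sum_mem a _ w)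
  refine Subtype.ext (VV_disj hd (ha i) (Finset.prod_ne_zero_iff.mpr fun j _ => ha j)
    (Nat.Coprime.prod_right fun j hj => hco i j ?_) (w i).2 h2)
  exact (Finset.ne_of_mem_erase hj).symm

/-- Decomposition of `VV` along a coprime factorization. -/
theorem VV_equiv {d : ℕ} (hd : 1 ≤ d) (A : Type*) [AddCommGroup A] {ι : Type*} [Fintype ι]
    (a : ι → ℕ) (ha : ∀ i, a i ≠ 0) (hco : ∀ i j, i ≠ j → (a i).Coprime (a j)) (m : ℕ)
    (hm : ∏ i, a i = m) : Nonempty (VV d A m ≃+ ∀ i, VV d A (a i)) := by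
  subst hm
  let φ : (∀ i, VV d A (a i)) →+ VV d A (∏ i, a i) :=
    { toFun := fun w => ⟨∑ i, (w i : A), VV_sum_mem a _ w⟩
      map_zero' := by ext; simp
      map_add' := by intro x y; ext; simp [Finset.sum_add_distrib] }
  refine ⟨(AddEquiv.ofBijective φ ⟨?_, ?_⟩).symm⟩
  · rw [injective_iff_map_eq_zero]
    intro w hw
    funext i
    exact VV_sum_inj hd a Finset.univ ha hco w (congrArg Subtype.val hw) i (Finset.mem_univ i)
  · rintro ⟨v, hv⟩
    obtain ⟨w, hw⟩ := VV_sum_surj hd a Finset.univ ha hco v hv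
    exact ⟨w, Subtype.ext hw⟩

/-- Cyclic subgroups. -/
abbrev Cyc (G : Type*) [AddGroup G] : Type _ := {C : AddSubgroup G // IsAddCyclic C}

theorem Cyc_gen {G : Type*} [AddGroup G] (C : Cyc G) :
    ∃ g : G, AddSubgroup.zmultiples g = C.1 :=
  (AddSubgroup.isAddCyclic_iff_exists_zmultiples_eq_top _).mp C.2

theorem Hmg_equiv (d : ℕ) (G A : Type*) [AddCommGroup G] [Finite G] [AddCommGroup A] :
    Nonempty (Hmg d G A ≃+ ∀ C : Cyc G, VV d A (Nat.card C.1)) := by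
  choose g hg using Cyc_gen (G := G)
  have hcard : ∀ C : Cyc G, Nat.card C.1 = addOrderOf (g C) := by
    intro C
    rw [← Nat.card_zmultiples, hg]
  have hcop : ∀ (x y : G), AddSubgroup.zmultiples x = AddSubgroup.zmultiples y →
      ∃ n : ℤ, n • x = y ∧ IsCoprime n (addOrderOf x : ℤ) := by
    intro x y h
    have hy : y ∈ AddSubgroup.zmultiples x := h ▸ AddSubgroup.mem_zmultiples y
    have hx : x ∈ AddSubgroup.zmultiples y := h ▸ AddSubgroup.mem_zmultiples x
    obtain ⟨n, hn⟩ := AddSubgroup.mem_zmultiples_iff.mp hy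
    obtain ⟨k, hk⟩ := AddSubgroup.mem_zmultiples_iff.mp hx
    refine ⟨n, hn, ?_⟩
    have h1 : (k * n - 1) • x = 0 := by
      rw [sub_smul, mul_smul, hn, hk, one_smul, sub_self]
    obtain ⟨c, hc⟩ := addOrderOf_dvd_iff_zsmul_eq_zero.mpr h1
    exact ⟨k, -c, by linarith⟩
  have hmem : ∀ (f : Hmg d G A) (C : Cyc G), f.1 (g C) ∈ VV d A (Nat.card C.1) := by
    intro f C n hn
    rw [hcard] at hn
    obtain ⟨c, hc⟩ := hn
    rw [← f.2 (g C) n ⟨1, -c, by linarith⟩]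
    congr 1
    rw [show n = n - 1 + 1 by ring, add_smul, one_smul,
      addOrderOf_dvd_iff_zsmul_eq_zero.mp ⟨c, hc⟩, zero_add]
  let φ : Hmg d G A →+ ∀ C : Cyc G, VV d A (Nat.card C.1) :=
    { toFun := fun f C => ⟨f.1 (g C), hmem f C⟩
      map_zero' := by funext C; ext; simp
      map_add' := by intro x y; funext C; ext; simp }
  refine ⟨AddEquiv.ofBijective φ ⟨?_, ?_⟩⟩
  · rw [injective_iff_map_eq_zero]
    intro f hf
    ext x
    let C : Cyc G := ⟨AddSubgroup.zmultiples x, inferInstance⟩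
    obtain ⟨n, hn, hn'⟩ := hcop (g C) x (hg C)
    have h1 : f.1 (g C) = 0 := congrArg Subtype.val (congrFun hf C)
    rw [← hn, f.2 _ _ hn', h1, smul_zero]
    rfl
  · intro v
    have hz : ∀ x : G, ∃ n : ℤ, n • g ⟨AddSubgroup.zmultiples x, inferInstance⟩ = x ∧
        IsCoprime n (addOrderOf (g ⟨AddSubgroup.zmultiples x, inferInstance⟩) : ℤ) :=
      fun x => hcop _ x (hg ⟨AddSubgroup.zmultiples x, inferInstance⟩)
    choose N hN hN' using hz
    let F : G → A := fun x => (N x) ^ d • (v ⟨AddSubgroup.zmultiples x, inferInstance⟩ : A)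
    -- independence of the chosen multiple
    have hF : ∀ (C : Cyc G) (n : ℤ), IsCoprime n (addOrderOf (g C) : ℤ) →
        F (n • g C) = n ^ d • (v C : A) := by
      intro C n hn
      have hC : (⟨AddSubgroup.zmultiples (n • g C), inferInstance⟩ : Cyc G) = C := by
        apply Subtype.ext
        change AddSubgroup.zmultiples (n • g C) = C.1
        conv_rhs => rw [← hg C]
        apply le_antisymm
        · rw [AddSubgroup.zmultiples_le]
          exact AddSubgroup.zsmul_mem_zmultiples _ _
        · rw [AddSubgroup.zmultiples_le]
          obtain ⟨a, b, hab⟩ := hn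
          refine AddSubgroup.mem_zmultiples_iff.mpr ⟨a, ?_⟩
          rw [smul_smul, show a * n = 1 - b * (addOrderOf (g C) : ℤ) by linarith, sub_smul,
            mul_smul, natCast_zsmul, addOrderOf_nsmul_eq_zero, smul_zero, one_smul, sub_zero]
      have e1 := hN (n • g C)
      have e2 := hN' (n • g C)
      change (N (n • g C)) ^ d • (v ⟨AddSubgroup.zmultiples (n • g C), _⟩ : A) = _
      rw [hC] at e1 e2 ⊢
      generalize N (n • g C) = n' at *
      obtain ⟨a, b, hab⟩ := hn
      have h1 : (addOrderOf (g C) : ℤ) ∣ n' - n := by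
        rw [addOrderOf_dvd_iff_zsmul_eq_zero, sub_smul, e1, sub_self]
      obtain ⟨c, hc⟩ := h1
      have hv := (v C).2
      have v1 := hv (a * n) ⟨-b, by rw [hcard]; linarith⟩
      have v2 := hv (a * n') ⟨a * c - b, by
        rw [hcard]; linear_combination hab + a * hc⟩
      calc n' ^ d • (v C : A) = n' ^ d • ((a * n) ^ d • (v C : A)) := by rw [v1]
        _ = n ^ d • ((a * n') ^ d • (v C : A)) := by
          rw [smul_smul, smul_smul]; congr 1; ring
        _ = _ := by rw [v2]
    refine ⟨⟨F, ?_⟩, ?_⟩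
    · intro x n hn
      have hx := hg ⟨AddSubgroup.zmultiples x, inferInstance⟩
      generalize hC : (⟨AddSubgroup.zmultiples x, inferInstance⟩ : Cyc G) = C at hx
      have hx' : AddSubgroup.zmultiples (g C) = AddSubgroup.zmultiples x := by
        rw [hx, ← hC]
      obtain ⟨k, hk, hk'⟩ := hcop (g C) x hx'
      have ho : addOrderOf x = addOrderOf (g C) := by
        rw [← Nat.card_zmultiples, ← hx', Nat.card_zmultiples]
      rw [ho] at hn
      rw [← hk, smul_smul, hF C _ (hn.mul_left hk'), hF C _ hk', mul_pow, mul_smul]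
    · funext C
      apply Subtype.ext
      have := hF C 1 isCoprime_one_left
      rw [one_smul, one_pow, one_smul] at this
      exact this

theorem primary_split (G : Type*) [AddCommGroup G] [Finite G] {p : ℕ} (hp : p.Prime) :
    ∃ u w : ℤ, u + w = 1 ∧ (∀ x : G, u • x ∈ primaryPart p G) ∧
      (∀ x ∈ primaryPart p G, w • x = 0) ∧ (∀ x : G, (addOrderOf (w • x)).Coprime p) := by
  have hN : Nat.card G ≠ 0 := Nat.card_pos.ne'
  set N := Nat.card G with hNdef
  have hcop : Nat.Coprime (p ^ N.factorization p) (N / p ^ N.factorization p) :=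
    (Nat.coprime_ordCompl hp hN).pow_left _
  have hmul : p ^ N.factorization p * (N / p ^ N.factorization p) = N :=
    Nat.ordProj_mul_ordCompl_eq_self N p
  have hcp : Nat.Coprime (N / p ^ N.factorization p) p := (Nat.coprime_ordCompl hp hN).symm
  generalize N / p ^ N.factorization p = m at *
  obtain ⟨a, b, hab⟩ := Nat.isCoprime_iff_coprime.mpr hcop
  have hkill : ∀ x : G, (p ^ N.factorization p * m) • x = 0 := by
    intro x
    rw [hmul]
    exact card_nsmul_eq_zero'
  refine ⟨b * m, a * (p ^ N.factorization p : ℕ), by linarith, ?_, ?_, ?_⟩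
  · intro x
    refine ⟨N.factorization p, ?_⟩
    rw [mul_smul, natCast_zsmul, smul_comm, smul_smul, hkill, smul_zero]
  · rintro x ⟨n, hn⟩
    obtain ⟨j, -, hj⟩ := (Nat.dvd_prime_pow hp).mp (addOrderOf_dvd_of_nsmul_eq_zero hn)
    have h1 : p ^ j ∣ N := hj ▸ addOrderOf_dvd_natCard x
    have h2 : p ^ j ∣ p ^ N.factorization p :=
      pow_dvd_pow _ ((hp.pow_dvd_iff_le_factorization hN).mp h1)
    rw [mul_smul, natCast_zsmul, addOrderOf_dvd_iff_nsmul_eq_zero.mp (hj ▸ h2), smul_zero]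
  · intro x
    refine Nat.Coprime.coprime_dvd_left (addOrderOf_dvd_of_nsmul_eq_zero ?_) hcp
    rw [mul_smul, natCast_zsmul, smul_comm, smul_smul, mul_comm, hkill, smul_zero]

/-- The intersection with the primary part. -/
def cycRes (p : ℕ) {G : Type*} [AddCommGroup G] (C : Cyc G) : Cyc (primaryPart p G) :=
  ⟨C.1.comap (primaryPart p G).subtype, by
    have := C.2
    exact isAddCyclic_of_injective
      (((primaryPart p G).subtype.comp (C.1.comap (primaryPart p G).subtype).subtype).codRestrict
        C.1 (fun x => x.2))
      (fun x y h => Subtype.ext (Subtype.ext (congrArg (fun t : C.1 => (t : G)) h)))⟩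

/-- The image in the quotient by the primary part. -/
def cycQuot (p : ℕ) {G : Type*} [AddCommGroup G] (C : Cyc G) : Cyc (G ⧸ primaryPart p G) :=
  ⟨C.1.map (QuotientAddGroup.mk' (primaryPart p G)), by
    obtain ⟨g, hg⟩ := Cyc_gen C
    rw [← hg, AddMonoidHom.map_zmultiples]
    infer_instance⟩

theorem cycRes_card (G : Type*) [AddCommGroup G] [Finite G] {p : ℕ} (hp : p.Prime) (C : Cyc G) :
    Nat.card (cycRes p C).1 = p ^ (Nat.card C.1).factorization p := by
  obtain ⟨u, w, huw, hu, hw, hcop⟩ := primary_split G hp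
  obtain ⟨z, hz⟩ := Cyc_gen C
  have hzz : z = u • z + w • z := by rw [← add_smul, huw, one_smul]
  have hres : (cycRes p C).1 = AddSubgroup.zmultiples (⟨u • z, hu z⟩ : primaryPart p G) := by
    ext ⟨x, hx⟩
    change x ∈ C.1 ↔ _
    rw [← hz, AddSubgroup.mem_zmultiples_iff, AddSubgroup.mem_zmultiples_iff]
    constructor
    · rintro ⟨n, rfl⟩
      refine ⟨n, Subtype.ext ?_⟩
      have h1 := hw _ hx
      change n • u • z = n • z
      conv_rhs => rw [hzz, smul_add]
      rw [smul_comm n w, h1, add_zero]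
    · rintro ⟨n, h⟩
      have h1 : n • u • z = x := congrArg Subtype.val h
      exact ⟨n * u, by rw [mul_smul, h1]⟩
  obtain ⟨n, hn⟩ := hu z
  obtain ⟨j, -, hj⟩ := (Nat.dvd_prime_pow hp).mp (addOrderOf_dvd_of_nsmul_eq_zero hn)
  have hord : addOrderOf z = addOrderOf (u • z) * addOrderOf (w • z) := by
    conv_lhs => rw [hzz]
    apply (AddCommute.all _ _).addOrderOf_add_eq_mul_addOrderOf_of_coprime
    rw [hj]
    exact (hcop z).symm.pow_left _
  have hcz : Nat.card C.1 = addOrderOf z := by rw [← hz, Nat.card_zmultiples]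
  rw [hres, Nat.card_zmultiples, AddSubgroup.addOrderOf_mk, hcz, hord]
  have hnd : ¬ p ∣ addOrderOf (w • z) := by
    intro h
    exact Nat.not_coprime_of_dvd_of_dvd hp.one_lt h dvd_rfl (hcop z)
  rw [hj, Nat.factorization_mul (pow_pos hp.pos _).ne' (addOrderOf_pos _).ne']
  simp [hp.factorization_pow, Nat.factorization_eq_zero_of_not_dvd hnd]

theorem cyc_bij (G : Type*) [AddCommGroup G] [Finite G] {p : ℕ} (hp : p.Prime) :
    Function.Bijective (fun C : Cyc G => (cycRes p C, cycQuot p C)) := by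
  obtain ⟨u, w, huw, hu, hw, -⟩ := primary_split G hp
  have hxx : ∀ z : G, z = u • z + w • z := fun z => by rw [← add_smul, huw, one_smul]
  constructor
  · have key : ∀ C C' : Cyc G, cycRes p C = cycRes p C' → cycQuot p C = cycQuot p C' →
        C.1 ≤ C'.1 := by
      intro C C' h1 h2 c hc
      rw [hxx c]
      apply AddSubgroup.add_mem
      · have : (⟨u • c, hu c⟩ : primaryPart p G) ∈ (cycRes p C).1 :=
          AddSubgroup.zsmul_mem C.1 hc u
        rw [h1] at this
        exact this
      · have : QuotientAddGroup.mk' (primaryPart p G) c ∈ (cycQuot p C).1 :=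
          AddSubgroup.mem_map_of_mem _ hc
        rw [h2] at this
        obtain ⟨c', hc', h3⟩ := this
        have h4 := hw _ (QuotientAddGroup.eq.mp h3)
        rw [smul_add, smul_neg, neg_add_eq_zero] at h4
        rw [← h4]
        exact AddSubgroup.zsmul_mem _ hc' _
    intro C C' h
    rw [Prod.mk.injEq] at h
    exact Subtype.ext (le_antisymm (key C C' h.1 h.2) (key C' C h.1.symm h.2.symm))
  · rintro ⟨D, E⟩
    obtain ⟨x, hx⟩ := Cyc_gen D
    obtain ⟨y', hy⟩ := Cyc_gen E
    obtain ⟨y, rfl⟩ := QuotientAddGroup.mk'_surjective _ y'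
    have hux : u • (x : G) = x := by
      conv_rhs => rw [hxx x, hw x x.2, add_zero]
    have huwy : u • w • y = 0 := by
      rw [smul_comm]; exact hw _ (hu y)
    have huz : u • ((x : G) + w • y) = x := by rw [smul_add, hux, huwy, add_zero]
    refine ⟨⟨AddSubgroup.zmultiples ((x : G) + w • y), inferInstance⟩, Prod.ext ?_ ?_⟩
    · apply Subtype.ext
      change AddSubgroup.comap _ (AddSubgroup.zmultiples ((x : G) + w • y)) = D.1
      rw [← hx]
      ext t
      rw [AddSubgroup.mem_comap, AddSubgroup.mem_zmultiples_iff, AddSubgroup.mem_zmultiples_iff]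
      constructor
      · rintro ⟨n, h⟩
        refine ⟨n, Subtype.ext ?_⟩
        change n • ((x : G) + w • y) = (t : G) at h
        change n • (x : G) = t
        rw [hxx t, hw t t.2, add_zero, ← h, smul_comm, huz]
      · rintro ⟨n, rfl⟩
        refine ⟨n * u, ?_⟩
        rw [mul_smul, huz]
        rfl
    · apply Subtype.ext
      change AddSubgroup.map _ (AddSubgroup.zmultiples ((x : G) + w • y)) = E.1
      rw [AddMonoidHom.map_zmultiples, ← hy]
      congr 1
      refine QuotientAddGroup.eq.mpr ?_
      have : -((x : G) + w • y) + y = -(x : G) + u • y := by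
        have h := hxx y
        rw [eq_sub_of_add_eq h.symm]; abel
      rw [this]
      exact AddSubgroup.add_mem _ (AddSubgroup.neg_mem _ x.2) (hu y)

theorem reindex_equiv (d : ℕ) (G A : Type*) [AddCommGroup G] [Finite G] [AddCommGroup A]
    {p : ℕ} (hp : p.Prime) :
    Nonempty ((∀ C : Cyc G, VV d A (p ^ (Nat.card C.1).factorization p)) ≃+
      (Fin (numCyclic (G ⧸ primaryPart p G)) → Hmg d (primaryPart p G) A)) := by
  let e := Equiv.ofBijective _ (cyc_bij G hp)
  have he1 : ∀ C, Nat.card (e C).1.1 = p ^ (Nat.card C.1).factorization p :=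
    fun C => cycRes_card G hp C
  obtain ⟨ψ⟩ := Hmg_equiv d (primaryPart p G) A
  let q : Fin (numCyclic (G ⧸ primaryPart p G)) ≃ Cyc (G ⧸ primaryPart p G) :=
    (Finite.equivFin _).symm
  have he2 : ∀ D E, Nat.card D.1 = p ^ (Nat.card (e.symm (D, E)).1).factorization p := by
    intro D E
    rw [← he1, Equiv.apply_symm_apply]
  let α : (∀ C : Cyc G, VV d A (p ^ (Nat.card C.1).factorization p)) ≃+
      (Fin (numCyclic (G ⧸ primaryPart p G)) →
        ∀ D : Cyc (primaryPart p G), VV d A (Nat.card D.1)) :=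
    { toFun := fun f i D => ⟨f (e.symm (D, q i)), by
        rw [he2 D (q i)]; exact (f (e.symm (D, q i))).2⟩
      invFun := fun f C => ⟨f (q.symm (e C).2) (e C).1, by
        rw [← he1 C]; exact (f (q.symm (e C).2) (e C).1).2⟩
      left_inv := by
        intro f
        funext C
        apply Subtype.ext
        have h : e.symm ((e C).1, q (q.symm (e C).2)) = C := by simp
        change (f (e.symm ((e C).1, q (q.symm (e C).2))) : A) = f C
        rw [h]
      right_inv := by
        intro f
        funext i D
        apply Subtype.ext
        change (f (q.symm (e (e.symm (D, q i))).2) (e (e.symm (D, q i))).1 : A) = f i D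
        rw [Equiv.apply_symm_apply, Equiv.symm_apply_apply]
      map_add' := fun f g => rfl }
  exact ⟨α.trans (AddEquiv.piCongrRight fun _ => ψ.symm)⟩

theorem main_equiv (G A : Type*) [AddCommGroup G] [Finite G] [AddCommGroup A] (d : ℕ)
    (hd : 1 ≤ d) :
    Nonempty ((Hmg d G A) ≃+
      ⨁ p : {p : ℕ // p.Prime ∧ p ∣ Nat.card G},
        (Fin (numCyclic (G ⧸ primaryPart p.1 G)) → (Hmg d (primaryPart p.1 G) A))) := by
  classical
  have hN : Nat.card G ≠ 0 := Nat.card_pos.ne'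
  let P := {p : ℕ // p.Prime ∧ p ∣ Nat.card G}
  have hmemP : ∀ p : ℕ, p ∈ (Nat.card G).primeFactors ↔ (p.Prime ∧ p ∣ Nat.card G) := by
    intro p; rw [Nat.mem_primeFactors]; tauto
  let _ : Fintype P := Fintype.subtype (Nat.card G).primeFactors hmemP
  obtain ⟨φ⟩ := Hmg_equiv d G A
  have h2 : ∀ C : Cyc G, Nonempty (VV d A (Nat.card C.1) ≃+
      ∀ p : P, VV d A (p.1 ^ (Nat.card C.1).factorization p.1)) := by
    intro C
    have hC : Nat.card C.1 ≠ 0 := Nat.card_pos.ne'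
    refine VV_equiv hd A _ (fun p => (pow_pos p.2.1.pos _).ne') ?_ _ ?_
    · intro p q hpq
      exact Nat.Coprime.pow _ _ ((Nat.coprime_primes p.2.1 q.2.1).mpr
        fun h => hpq (Subtype.ext h))
    · have h3 : ∏ p ∈ (Nat.card G).primeFactors, p ^ (Nat.card C.1).factorization p =
          Nat.card C.1 := by
        conv_rhs => rw [← Nat.prod_factorization_pow_eq_self hC]
        rw [Finsupp.prod]
        symm
        apply Finset.prod_subset
        · rw [Nat.support_factorization]
          exact Nat.primeFactors_mono (AddSubgroup.card_addSubgroup_dvd_card C.1) hN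
        · intro p _ hp
          rw [Finsupp.notMem_support_iff.mp hp, pow_zero]
      conv_rhs => rw [← h3]
      exact (Finset.prod_subtype (Nat.card G).primeFactors hmemP
        (fun p => p ^ (Nat.card C.1).factorization p)).symm
  have β := fun C => Classical.choice (h2 C)
  have γ := fun p : P => Classical.choice (reindex_equiv d G A p.2.1)
  let σ : (∀ C : Cyc G, ∀ p : P, VV d A (p.1 ^ (Nat.card C.1).factorization p.1)) ≃+
      (∀ p : P, ∀ C : Cyc G, VV d A (p.1 ^ (Nat.card C.1).factorization p.1)) :=
    { toFun := fun f p C => f C p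
      invFun := fun f C p => f p C
      left_inv := fun _ => rfl
      right_inv := fun _ => rfl
      map_add' := fun _ _ => rfl }
  exact ⟨((φ.trans (AddEquiv.piCongrRight β)).trans σ).trans
    ((AddEquiv.piCongrRight γ).trans (DirectSum.addEquivProd _).symm)⟩

theorem stmt16 (G : Type*) [AddCommGroup G] [Finite G] (d : ℕ) (hd : 1 ≤ d) :
    Nonempty ((Hmg d G QZ) ≃+
      ⨁ p : {p : ℕ // p.Prime ∧ p ∣ Nat.card G},
        (Fin (numCyclic (G ⧸ primaryPart p.1 G)) → (Hmg d (primaryPart p.1 G) QZ))) := by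
  exact main_equiv G QZ d hd

end
end

section
/- Let G be a finite abelian group. Then there is an isomorphism of abelian groups Hmg(G)/Coc(G) ≅ ⊕_{p | |G|} (Hmg(G_p)/Coc(G_p))^{q(G/G_p)}, where the sum runs over primes p dividing the order of G, G_p is the p-Sylow subgroup of G, q(G/G_p) is the number of cyclic subgroups of G/G_p, and the exponent denotes a direct sum of q(G/G_p) copies. -/
open scoped DirectSum

noncomputable section

/-- The homogeneous function of degree one induced by a character `φ` of a subgroup `K`:
it agrees with `φ` on `K` and vanishes off `K`. -/
def cocFun {G : Type*} [AddCommGroup G] (K : AddSubgroup G) (φ : K →+ QZ) : G → QZ :=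
  fun g =>
    letI := Classical.dec (g ∈ K)
    if h : g ∈ K then φ ⟨g, h⟩ else 0

/-- `Coc G`: the subgroup of `Hmg(G) = Hmg 1 G (ℚ/ℤ)` generated by the cocyclic functions,
i.e. the functions `φ_K` for `K` a cocyclic subgroup (one with `G/K` cyclic) and `φ` a
character of `K`. -/
def Coc (G : Type*) [AddCommGroup G] : AddSubgroup (Hmg 1 G QZ) :=
  AddSubgroup.closure
    {f | ∃ K : AddSubgroup G, IsAddCyclic (G ⧸ K) ∧ ∃ φ : K →+ QZ, (f : G → QZ) = cocFun K φ}

lemma card_nsmul_le_of_prime {A : Type*} [AddCommGroup A] [Finite A]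
    (h : ∀ q : ℕ, q.Prime → Nat.card {x : A // q • x = 0} ≤ q) (n : ℕ) (hn : 0 < n) :
    Nat.card {x : A // n • x = 0} ≤ n := by
  classical
  induction n using induction_on_primes with
  | zero => omega
  | one => simp
  | prime_mul q n hq ih =>
    have hn0 : 0 < n := Nat.pos_of_mul_pos_left hn
    have := Fintype.ofFinite A
    have e1 : ∀ m : ℕ, Nat.card {x : A // m • x = 0} = (Finset.univ.filter (fun x : A => m • x = 0)).card := by
      intro m
      rw [Nat.card_eq_fintype_card, Fintype.card_subtype]
    rw [e1] at ih ⊢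
    have hq' := h q hq
    rw [e1] at hq'
    have key := Finset.card_le_mul_card_image_of_maps_to
      (f := fun x : A => q • x) (s := Finset.univ.filter (fun x : A => (q * n) • x = 0))
      (t := Finset.univ.filter (fun x : A => n • x = 0)) (by
        intro x hx
        simp only [Finset.mem_filter, Finset.mem_univ, true_and] at hx ⊢
        rw [← mul_nsmul]; exact hx) q (by
        intro b hb
        by_cases hne : ((Finset.univ.filter (fun x : A => (q * n) • x = 0)).filter (fun x => q • x = b)).Nonempty
        · obtain ⟨x0, hx0⟩ := hne
          refine le_trans ?_ hq'
          refine Finset.card_le_card_of_injOn (fun x => x - x0) ?_ ?_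
          · intro x hx
            simp only [Finset.mem_filter, Finset.mem_univ, true_and, Finset.coe_filter, Set.mem_ofPred_eq] at hx hx0 ⊢
            rw [smul_sub, hx.2, hx0.2, sub_self]
          · intro x _ y _ hxy
            simpa using hxy
        · rw [Finset.not_nonempty_iff_eq_empty] at hne
          rw [hne]; simp)
    exact key.trans (Nat.mul_le_mul_left _ (ih hn0))

lemma exists_prod_zmod {A : Type*} [AddCommGroup A] [Finite A] (hA : ¬ IsAddCyclic A) :
    ∃ q : ℕ, q.Prime ∧ q ∣ Nat.card A ∧ ∃ i : (ZMod q × ZMod q) →+ A, Function.Injective i := by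
  classical
  have : ∃ q : ℕ, q.Prime ∧ q < Nat.card {x : A // q • x = 0} := by
    by_contra! hcon
    apply hA
    have := Fintype.ofFinite A
    refine isAddCyclic_of_card_nsmul_eq_zero_le (fun n hn => ?_)
    have := card_nsmul_le_of_prime hcon n hn
    rwa [Nat.card_eq_fintype_card, Fintype.card_subtype] at this
  obtain ⟨q, hq, hlt⟩ := this
  have : Fact q.Prime := ⟨hq⟩
  let V : AddSubgroup A := (nsmulAddMonoidHom q : A →+ A).ker
  have hV : ∀ x : V, q • x = 0 := by
    rintro ⟨x, hx⟩
    exact Subtype.ext hx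
  have hcard : q < Nat.card V := hlt
  let _ : Module (ZMod q) V := AddCommGroup.zmodModule hV
  have : Nontrivial V := by
    rw [← Finite.one_lt_card_iff_nontrivial]
    exact lt_trans hq.one_lt hcard
  obtain ⟨x, hx⟩ := exists_ne (0 : V)
  have hy : ∃ y : V, y ∉ AddSubgroup.zmultiples x := by
    by_contra! hall
    have h1 : AddSubgroup.zmultiples x = ⊤ := by ext; simp [hall]
    have h2 : Nat.card (AddSubgroup.zmultiples x) ≤ q := by
      rw [Nat.card_zmultiples]
      exact Nat.le_of_dvd hq.pos (addOrderOf_dvd_of_nsmul_eq_zero (hV x))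
    rw [h1, AddSubgroup.card_top] at h2
    omega
  obtain ⟨y, hy⟩ := hy
  have hmem : ∀ a : ZMod q, a • x ∈ AddSubgroup.zmultiples x := by
    intro a
    have := (AddSubgroup.toZModSubmodule q (AddSubgroup.zmultiples x)).smul_mem a
      (x := x) (by simp)
    simpa using this
  refine ⟨q, hq, ?_, ⟨V.subtype.comp
    (AddMonoidHom.coprod (LinearMap.toSpanSingleton (ZMod q) V x).toAddMonoidHom
      (LinearMap.toSpanSingleton (ZMod q) V y).toAddMonoidHom), ?_⟩⟩
  · have : addOrderOf x = q := addOrderOf_eq_prime (hV x) hx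
    rw [← this]
    rw [← AddSubgroup.addOrderOf_coe]
    exact addOrderOf_dvd_natCard _
  · rw [AddMonoidHom.coe_comp]
    refine Function.Injective.comp V.subtype_injective ?_
    rw [injective_iff_map_eq_zero]
    rintro ⟨a, b⟩ hab
    have hab : a • x + b • y = 0 := by simpa using hab
    have hb : b = 0 := by
      by_contra hb
      apply hy
      have : y = (-(b⁻¹ * a)) • x := by
        have h3 : b • y = - (a • x) := by rw [eq_neg_iff_add_eq_zero, add_comm]; exact hab
        calc y = b⁻¹ • (b • y) := by rw [smul_smul, inv_mul_cancel₀ hb, one_smul]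
          _ = _ := by rw [h3, smul_neg, smul_smul, neg_smul]
      rw [this]; exact hmem _
    subst hb
    have ha : a = 0 := by
      simp only [zero_smul, add_zero] at hab
      by_contra ha
      apply hx
      rw [← one_smul (ZMod q) x, ← inv_mul_cancel₀ ha, mul_smul, hab, smul_zero]
    rw [ha]; rfl

/-- integer indicator function -/
def indI {X : Type*} (S : Set X) : X → ℤ := fun x =>
  letI := Classical.dec (x ∈ S)
  if x ∈ S then 1 else 0

lemma indI_of_mem {X : Type*} {S : Set X} {x : X} (h : x ∈ S) : indI S x = 1 := by
  simp [indI, h]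

lemma indI_of_notMem {X : Type*} {S : Set X} {x : X} (h : x ∉ S) : indI S x = 0 := by
  simp [indI, h]

lemma indI_congr {X Y : Type*} {S : Set X} {T : Set Y} {x : X} {y : Y} (h : x ∈ S ↔ y ∈ T) :
    indI S x = indI T y := by
  by_cases hx : x ∈ S
  · rw [indI_of_mem hx, indI_of_mem (h.1 hx)]
  · rw [indI_of_notMem hx, indI_of_notMem (fun hy => hx (h.2 hy))]

lemma zmod_lines (q : ℕ) [Fact q.Prime] (v : ZMod q × ZMod q) :
    (q : ℤ) * indI {v : ZMod q × ZMod q | v = 0} v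
      = (∑ i : ZMod q, indI {v : ZMod q × ZMod q | v.2 = i * v.1} v)
        + indI {v : ZMod q × ZMod q | v.1 = 0} v - 1 := by
  classical
  obtain ⟨a, b⟩ := v
  by_cases ha : a = 0
  · by_cases hb : b = 0
    · subst ha hb
      simp [indI, ZMod.card]
    · subst ha
      simp [indI, hb]
  · have : ∀ i : ZMod q, (b = i * a) ↔ (i = b / a) := by
      intro i; rw [eq_div_iff ha, eq_comm]
    simp [indI, ha, this]

/-- The subgroups used in the relation. -/
lemma exists_relation {A : Type*} [AddCommGroup A] [Finite A] (H : AddSubgroup A)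
    (hH : ¬ IsAddCyclic (A ⧸ H)) :
    ∃ q : ℕ, q.Prime ∧ q ∣ Nat.card A ∧ ∃ (L : ZMod q → AddSubgroup A) (M E : AddSubgroup A),
      ∃ _ : Fintype (ZMod q),
      (∀ i, H < L i) ∧ H < M ∧ H < E ∧ ∀ x : A, (q : ℤ) * indI (H : Set A) x =
        (∑ i : ZMod q, indI (L i : Set A) x) + indI (M : Set A) x - indI (E : Set A) x := by
  classical
  obtain ⟨q, hq, hqd, i, hi⟩ := exists_prod_zmod hH
  have : Fact q.Prime := ⟨hq⟩
  let lift (S : AddSubgroup (ZMod q × ZMod q)) : AddSubgroup A :=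
    (S.map i).comap (QuotientAddGroup.mk' H)
  have hmem : ∀ S (v) (x : A), i v = QuotientAddGroup.mk' H x → (x ∈ lift S ↔ v ∈ S) := by
    intro S v x hv
    simp only [lift, AddSubgroup.mem_comap, AddSubgroup.mem_map, ← hv]
    constructor
    · rintro ⟨w, hw, h⟩; rwa [← hi h]
    · intro h; exact ⟨v, h, rfl⟩
  have hnot : ∀ S (x : A), (∀ v, i v ≠ QuotientAddGroup.mk' H x) → x ∉ lift S := by
    rintro S x hx ⟨v, -, hv⟩
    exact hx v hv
  have hbot : ∀ x, x ∈ H ↔ x ∈ lift ⊥ := by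
    intro x; simp [lift]
  have hlt : ∀ S, S ≠ ⊥ → H < lift S := by
    intro S hS
    obtain ⟨⟨v, hv⟩, hv0'⟩ := AddSubgroup.ne_bot_iff_exists_ne_zero.1 hS
    have hv0 : v ≠ 0 := fun h => hv0' (Subtype.ext h)
    refine lt_of_le_of_ne ?_ ?_
    · intro x hx
      refine (hmem S 0 x ?_).2 S.zero_mem
      rw [map_zero, eq_comm]; simpa using hx
    · intro heq
      obtain ⟨x, hx⟩ := QuotientAddGroup.mk'_surjective H (i v)
      have h1 : x ∈ lift S := (hmem S v x hx.symm).2 hv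
      rw [← heq, hbot] at h1
      exact hv0 ((hmem ⊥ v x hx.symm).1 h1)
  let Lf (j : ZMod q) : AddSubgroup (ZMod q × ZMod q) :=
    (AddMonoidHom.snd (ZMod q) (ZMod q) - (AddMonoidHom.mulLeft j).comp (AddMonoidHom.fst (ZMod q) (ZMod q))).ker
  have hLf : ∀ j v, v ∈ Lf j ↔ v.2 = j * v.1 := by
    intro j v; simp [Lf, AddMonoidHom.mem_ker, sub_eq_zero]
  let Mf : AddSubgroup (ZMod q × ZMod q) := (AddMonoidHom.fst (ZMod q) (ZMod q)).ker
  have hMf : ∀ v, v ∈ Mf ↔ v.1 = 0 := by intro v; exact Iff.rfl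
  refine ⟨q, hq, hqd.trans (AddSubgroup.card_quotient_dvd_card H), fun j => lift (Lf j), lift Mf, lift ⊤, inferInstance, ?_, ?_, ?_, ?_⟩
  · intro j
    apply hlt
    intro h
    have : ((1, j) : ZMod q × ZMod q) ∈ Lf j := by rw [hLf]; simp
    rw [h] at this
    simp at this
  · apply hlt
    intro h
    have : ((0, 1) : ZMod q × ZMod q) ∈ Mf := by rw [hMf]
    rw [h] at this
    simp at this
  · apply hlt; exact top_ne_bot
  · intro x
    by_cases hx : ∃ v, i v = QuotientAddGroup.mk' H x
    · obtain ⟨v, hv⟩ := hx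
      have e0 : indI (H : Set A) x = indI {v : ZMod q × ZMod q | v = 0} v :=
        indI_congr ((hbot x).trans (hmem _ v x hv))
      have e1 : ∀ j, indI (lift (Lf j) : Set A) x = indI {v : ZMod q × ZMod q | v.2 = j * v.1} v :=
        fun j => indI_congr ((hmem _ v x hv).trans (hLf j v))
      have e2 : indI (lift Mf : Set A) x = indI {v : ZMod q × ZMod q | v.1 = 0} v :=
        indI_congr ((hmem _ v x hv).trans (hMf v))
      have e3 : indI (lift ⊤ : Set A) x = 1 := indI_of_mem ((hmem _ v x hv).2 trivial)
      simp only [e0, e1, e2, e3]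
      exact zmod_lines q v
    · push Not at hx
      have h0 : x ∉ H := by rw [hbot]; exact hnot _ _ hx
      rw [indI_of_notMem h0, indI_of_notMem (hnot _ _ hx), indI_of_notMem (hnot _ _ hx)]
      rw [Finset.sum_eq_zero]
      · simp
      · intro j _; exact indI_of_notMem (hnot _ _ hx)

/-- Data: `e` is an integer idempotent projecting to the `p`-part. -/
structure IsE (G : Type*) [AddCommGroup G] (p k m : ℕ) (e : ℤ) : Prop where
  prime : p.Prime
  card : Nat.card G = p ^ k * m
  cop : (p ^ k).Coprime m
  copp : p.Coprime m
  dvd_sub : ((p ^ k : ℕ) : ℤ) ∣ e - 1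
  dvd : (m : ℤ) ∣ e

lemma zsmul_zero_of_dvd {A : Type*} [AddCommGroup A] {a b : ℤ} (h : a ∣ b) {x : A}
    (hx : a • x = 0) : b • x = 0 := by
  obtain ⟨c, rfl⟩ := h
  rw [mul_comm, mul_smul, hx, smul_zero]

lemma zero_of_coprime {A : Type*} [AddCommGroup A] {a b : ℤ} (h : IsCoprime a b) {x : A}
    (ha : a • x = 0) (hb : b • x = 0) : x = 0 := by
  obtain ⟨c, d, hcd⟩ := h
  rw [← one_smul ℤ x, ← hcd, add_smul, mul_smul, mul_smul, ha, hb]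
  simp

lemma mem_of_coprime {A : Type*} [AddCommGroup A] (B : AddSubgroup A) {a b : ℤ}
    (h : IsCoprime a b) {x : A}
    (ha : a • x ∈ B) (hb : b • x ∈ B) : x ∈ B := by
  obtain ⟨c, d, hcd⟩ := h
  rw [← one_smul ℤ x, ← hcd, add_smul, mul_smul, mul_smul]
  exact B.add_mem (B.zsmul_mem ha _) (B.zsmul_mem hb _)

lemma Hmg_smul {G : Type*} [AddCommGroup G] {f : G → QZ} (hf : f ∈ Hmg 1 G QZ) (x : G) (n : ℤ)
    (h : IsCoprime n (addOrderOf x : ℤ)) : f (n • x) = n • f x := by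
  have := hf x n h
  rwa [pow_one] at this

lemma Hmg_torsion {G : Type*} [AddCommGroup G] {f : G → QZ} (hf : f ∈ Hmg 1 G QZ) (x : G) (n : ℤ)
    (h : n • x = 0) : n • f x = 0 := by
  have h1 : (addOrderOf x : ℤ) ∣ n := addOrderOf_dvd_iff_zsmul_eq_zero.2 h
  have h2 : IsCoprime (n + 1) (addOrderOf x : ℤ) := by
    obtain ⟨c, rfl⟩ := h1
    exact ⟨1, -c, by ring⟩
  have h3 := Hmg_smul hf x (n + 1) h2
  rw [add_smul, add_smul, h, zero_add, one_smul, one_smul] at h3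
  simpa using h3

set_option linter.unusedSectionVars false

namespace IsE

variable {G : Type*} [AddCommGroup G] [Finite G] {p k m : ℕ} {e : ℤ}

lemma n_dvd (hE : IsE G p k m e) : ((Nat.card G : ℕ) : ℤ) ∣ e * (e - 1) := by
  rw [hE.card, mul_comm e]
  push_cast
  have := hE.dvd_sub
  push_cast at this
  exact mul_dvd_mul this hE.dvd

lemma card_smul (hE : IsE G p k m e) (g : G) : ((Nat.card G : ℕ) : ℤ) • g = 0 := by
  rw [natCast_zsmul]; exact card_nsmul_eq_zero'

lemma pk_smul (hE : IsE G p k m e) {A : Type*} [AddCommGroup A] (x : A) (h : ((Nat.card G : ℕ) : ℤ) • x = 0) :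
    ((p ^ k : ℕ) : ℤ) • (e • x) = 0 := by
  rw [← mul_smul]
  refine zsmul_zero_of_dvd ?_ h
  rw [hE.card]
  push_cast
  exact mul_dvd_mul_left _ hE.dvd

lemma e_smul_of_pk (hE : IsE G p k m e) {A : Type*} [AddCommGroup A] (x : A) (h : ((p ^ k : ℕ) : ℤ) • x = 0) :
    e • x = x := by
  have := zsmul_zero_of_dvd hE.dvd_sub h
  rwa [sub_smul, one_smul, sub_eq_zero] at this

lemma e_e (hE : IsE G p k m e) {A : Type*} [AddCommGroup A] (x : A) (h : ((Nat.card G : ℕ) : ℤ) • x = 0) :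
    e • (e • x) = e • x := hE.e_smul_of_pk _ (hE.pk_smul x h)

lemma mem_iff (hE : IsE G p k m e) (x : G) : x ∈ primaryPart p G ↔ ((p ^ k : ℕ) : ℤ) • x = 0 := by
  constructor
  · rintro ⟨j, hj⟩
    have h1 : ((p ^ j : ℕ) : ℤ) • ((p ^ k : ℕ) : ℤ) • x = 0 := by
      rw [smul_comm, natCast_zsmul _ (p ^ j), hj, smul_zero]
    have h2 : (m : ℤ) • ((p ^ k : ℕ) : ℤ) • x = 0 := by
      rw [← mul_smul]
      have := card_smul hE x
      rw [hE.card] at this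
      push_cast at this ⊢
      rwa [mul_comm]
    exact zero_of_coprime (Nat.isCoprime_iff_coprime.2 (hE.copp.pow_left j)) h1 h2
  · intro h
    exact ⟨k, by rwa [natCast_zsmul] at h⟩

lemma e_mem (hE : IsE G p k m e) (g : G) : e • g ∈ primaryPart p G :=
  (hE.mem_iff _).2 (hE.pk_smul g (hE.card_smul g))

lemma e_smul_mem (hE : IsE G p k m e) {x : G} (hx : x ∈ primaryPart p G) : e • x = x :=
  hE.e_smul_of_pk x ((hE.mem_iff x).1 hx)

lemma pk_sub (hE : IsE G p k m e) (x : primaryPart p G) : ((p ^ k : ℕ) : ℤ) • x = 0 :=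
  Subtype.ext ((hE.mem_iff x.1).1 x.2)

lemma coprime_combo (hE : IsE G p k m e) (g : G) (a b : ℤ) (ha : IsCoprime a (addOrderOf (e • g) : ℤ))
    (hb : IsCoprime b (addOrderOf ((1 - e) • g) : ℤ)) :
    IsCoprime (e * a + (1 - e) * b) (addOrderOf g : ℤ) := by
  have h1 : (addOrderOf g : ℤ) ∣ (addOrderOf (e • g) : ℤ) * (addOrderOf ((1 - e) • g) : ℤ) := by
    have := (AddCommute.all (e • g) ((1 - e) • g)).addOrderOf_add_dvd_mul_addOrderOf
    rw [← add_smul] at this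
    rw [show e + (1 - e) = 1 by ring, one_smul] at this
    exact_mod_cast this
  have hee := hE.e_e g (hE.card_smul g)
  have h2 : (addOrderOf (e • g) : ℤ) ∣ e - 1 := by
    rw [addOrderOf_dvd_iff_zsmul_eq_zero, sub_smul, hee, one_smul, sub_self]
  have h3 : (addOrderOf ((1 - e) • g) : ℤ) ∣ e := by
    rw [addOrderOf_dvd_iff_zsmul_eq_zero, sub_smul, smul_sub, hee, one_smul, sub_self]
  refine IsCoprime.of_isCoprime_of_dvd_right (IsCoprime.mul_right ?_ ?_) h1
  · obtain ⟨c, hc⟩ := h2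
    rw [show e * a + (1 - e) * b = a + (addOrderOf (e • g) : ℤ) * (c * (a - b)) by
      rw [← mul_assoc, ← hc]; ring]
    exact IsCoprime.add_mul_left_left ha _
  · obtain ⟨c, hc⟩ := h3
    rw [show e * a + (1 - e) * b = b + (addOrderOf ((1 - e) • g) : ℤ) * (c * (a - b)) by
      rw [← mul_assoc, ← hc]; ring]
    exact IsCoprime.add_mul_left_left hb _

lemma main_smul (hE : IsE G p k m e) {f : G → QZ} (hf : f ∈ Hmg 1 G QZ) (g : G) (a b : ℤ)
    (ha : IsCoprime a (addOrderOf (e • g) : ℤ))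
    (hb : IsCoprime b (addOrderOf ((1 - e) • g) : ℤ)) :
    e • f (a • e • g + b • (1 - e) • g) = a • e • f g := by
  have h1 := Hmg_smul hf g _ (hE.coprime_combo g a b ha hb)
  have h2 : a • e • g + b • (1 - e) • g = (e * a + (1 - e) * b) • g := by
    simp only [← mul_smul, ← add_smul]; congr 1; ring
  have h3 := hE.e_e (f g) (Hmg_torsion hf g _ (hE.card_smul g))
  rw [h2, h1]
  have h4 : e • (e * a + (1 - e) * b) • f g = (a - b) • e • e • f g + b • e • f g := by
    simp only [← mul_smul, ← add_smul]; congr 1; ring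
  rw [h4, h3, ← add_smul]; congr 1; ring

lemma decomp (hE : IsE G p k m e) {x y : G} (hx : x ∈ primaryPart p G) (hy : e • y = 0) :
    e • (x + y) = x ∧ (1 - e) • (x + y) = y := by
  have h : e • (x + y) = x := by rw [smul_add, hE.e_smul_mem hx, hy, add_zero]
  refine ⟨h, ?_⟩
  rw [sub_smul, h, one_smul]; abel

/-- Functions in `Hmg G` give functions in `Hmg G_p`. -/
lemma phi_mem (hE : IsE G p k m e) {f : G → QZ} (hf : f ∈ Hmg 1 G QZ) {y : G} (hy : e • y = 0) :
    (fun x : primaryPart p G => e • f (x.1 + y)) ∈ Hmg 1 (primaryPart p G) QZ := by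
  intro x n hn
  rw [pow_one]
  obtain ⟨h1, h2⟩ := hE.decomp x.2 hy
  have := hE.main_smul hf (x.1 + y) n 1 (by rwa [h1, AddSubgroup.addOrderOf_coe]) isCoprime_one_left
  rw [h1, h2, one_smul] at this
  exact this

end IsE

/-- the homomorphism `Hmg G → Hmg G_p`. -/
def phi {G : Type*} [AddCommGroup G] [Finite G] {p k m : ℕ} {e : ℤ} (hE : IsE G p k m e)
    (y : G) (hy : e • y = 0) : Hmg 1 G QZ →+ Hmg 1 (primaryPart p G) QZ where
  toFun f := ⟨fun x => e • f.1 (x.1 + y), hE.phi_mem f.2 hy⟩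
  map_zero' := by ext x; simp
  map_add' := by intro f g; ext x; simp

/-- projection to the p-part -/
def piP {G : Type*} [AddCommGroup G] [Finite G] {p k m : ℕ} {e : ℤ} (hE : IsE G p k m e) :
    G →+ primaryPart p G where
  toFun g := ⟨e • g, hE.e_mem g⟩
  map_zero' := by ext; simp
  map_add' := by intro f g; ext; simp

/-- the twisted functions -/
def tw {G : Type*} [AddCommGroup G] [Finite G] {p k m : ℕ} {e : ℤ} (hE : IsE G p k m e)
    (F : G ⧸ primaryPart p G → ℤ) (h : primaryPart p G → QZ) : G → QZ :=
  fun g => F (QuotientAddGroup.mk g) • h (piP hE g)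

/-- elements generating a given subgroup -/
def genSet {A : Type*} [AddCommGroup A] (C : AddSubgroup A) : Set A :=
  {x | AddSubgroup.zmultiples x = C}

lemma zmultiples_smul {A : Type*} [AddCommGroup A] (x : A) (n : ℤ)
    (h : IsCoprime n (addOrderOf x : ℤ)) :
    AddSubgroup.zmultiples (n • x) = AddSubgroup.zmultiples x := by
  apply le_antisymm
  · rw [AddSubgroup.zmultiples_le]
    exact AddSubgroup.zsmul_mem_zmultiples x n
  · rw [AddSubgroup.zmultiples_le]
    refine mem_of_coprime _ h (AddSubgroup.mem_zmultiples _) ?_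
    have : (addOrderOf x : ℤ) • x = 0 := by rw [natCast_zsmul, addOrderOf_nsmul_eq_zero]
    rw [this]
    exact AddSubgroup.zero_mem _

lemma tw_gen_mem {G : Type*} [AddCommGroup G] [Finite G] {p k m : ℕ} {e : ℤ} (hE : IsE G p k m e)
    (C : AddSubgroup (G ⧸ primaryPart p G)) {h : primaryPart p G → QZ}
    (hh : h ∈ Hmg 1 (primaryPart p G) QZ) : tw hE (indI (genSet C)) h ∈ Hmg 1 G QZ := by
  intro g n hn
  rw [pow_one]
  have h1 : IsCoprime n (addOrderOf (QuotientAddGroup.mk g : G ⧸ primaryPart p G) : ℤ) :=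
    IsCoprime.of_isCoprime_of_dvd_right hn
      (by exact_mod_cast addOrderOf_map_dvd (QuotientAddGroup.mk' (primaryPart p G)) g)
  have h2 : IsCoprime n (addOrderOf (piP hE g) : ℤ) :=
    IsCoprime.of_isCoprime_of_dvd_right hn
      (by exact_mod_cast addOrderOf_map_dvd (piP hE) g)
  have h3 : indI (genSet C) (QuotientAddGroup.mk (n • g) : G ⧸ primaryPart p G) =
      indI (genSet C) (QuotientAddGroup.mk g : G ⧸ primaryPart p G) := by
    apply indI_congr
    have := zmultiples_smul _ n h1
    simp only [genSet, Set.mem_ofPred_eq, QuotientAddGroup.mk_zsmul, this]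
  unfold tw
  rw [h3, map_zsmul, Hmg_smul hh _ n h2, smul_comm]

/-- the homomorphism `Hmg G_p → Hmg G` for the subgroup `C` -/
def psi {G : Type*} [AddCommGroup G] [Finite G] {p k m : ℕ} {e : ℤ} (hE : IsE G p k m e)
    (C : AddSubgroup (G ⧸ primaryPart p G)) : Hmg 1 (primaryPart p G) QZ →+ Hmg 1 G QZ where
  toFun h := ⟨tw hE (indI (genSet C)) h.1, tw_gen_mem hE C h.2⟩
  map_zero' := by ext x; simp [tw]
  map_add' := by intro f g; ext x; simp [tw]

lemma cocFun_pos {G : Type*} [AddCommGroup G] (K : AddSubgroup G) (φ : K →+ QZ) {g : G}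
    (h : g ∈ K) : cocFun K φ g = φ ⟨g, h⟩ := by simp [cocFun, h]

lemma cocFun_neg {G : Type*} [AddCommGroup G] (K : AddSubgroup G) (φ : K →+ QZ) {g : G}
    (h : g ∉ K) : cocFun K φ g = 0 := by simp [cocFun, h]

lemma cocFun_mem {G : Type*} [AddCommGroup G] (K : AddSubgroup G) (φ : K →+ QZ) :
    cocFun K φ ∈ Hmg 1 G QZ := by
  intro x n hn
  rw [pow_one]
  have h : n • x ∈ K ↔ x ∈ K := by
    constructor
    · intro h
      refine mem_of_coprime K hn h ?_
      have : (addOrderOf x : ℤ) • x = 0 := by rw [natCast_zsmul, addOrderOf_nsmul_eq_zero]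
      rw [this]; exact K.zero_mem
    · intro h; exact K.zsmul_mem h n
  by_cases hx : x ∈ K
  · have hx' := h.2 hx
    simp only [cocFun, hx, hx', dif_pos]
    rw [← map_zsmul]; rfl
  · have hx' := fun h' => hx (h.1 h')
    rw [cocFun_neg K φ hx, cocFun_neg K φ hx', smul_zero]

/-- `Coc` as a subgroup of all functions -/
def CocF (G : Type*) [AddCommGroup G] : AddSubgroup (G → QZ) :=
  AddSubgroup.closure
    {f | ∃ K : AddSubgroup G, IsAddCyclic (G ⧸ K) ∧ ∃ φ : K →+ QZ, f = cocFun K φ}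

lemma mem_Coc_iff {G : Type*} [AddCommGroup G] (f : Hmg 1 G QZ) : f ∈ Coc G ↔ f.1 ∈ CocF G := by
  have : CocF G = (Coc G).map (Hmg 1 G QZ).subtype := by
    rw [CocF, Coc, AddMonoidHom.map_closure]
    congr 1
    ext f
    constructor
    · rintro ⟨K, hK, φ, rfl⟩
      exact ⟨⟨_, cocFun_mem K φ⟩, ⟨K, hK, φ, rfl⟩, rfl⟩
    · rintro ⟨f, ⟨K, hK, φ, h⟩, rfl⟩
      exact ⟨K, hK, φ, h⟩
  rw [this, AddSubgroup.mem_map]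
  constructor
  · intro h; exact ⟨f, h, rfl⟩
  · rintro ⟨g, hg, h⟩
    rwa [← Subtype.ext h]

lemma cocFun_mem_CocF {G : Type*} [AddCommGroup G] (K : AddSubgroup G) (hK : IsAddCyclic (G ⧸ K))
    (φ : K →+ QZ) : cocFun K φ ∈ CocF G :=
  AddSubgroup.subset_closure ⟨K, hK, φ, rfl⟩

lemma isAddCyclic_quot_ker {A B : Type*} [AddCommGroup A] [AddCommGroup B] [IsAddCyclic B]
    (f : A →+ B) : IsAddCyclic (A ⧸ f.ker) :=
  isAddCyclic_of_injective (QuotientAddGroup.kerLift f) (QuotientAddGroup.kerLift_injective f)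

lemma phi_Coc {G : Type*} [AddCommGroup G] [Finite G] {p k m : ℕ} {e : ℤ} (hE : IsE G p k m e)
    (y : G) (hy : e • y = 0) (f : Hmg 1 G QZ) (hf : f ∈ Coc G) :
    phi hE y hy f ∈ Coc (primaryPart p G) := by
  suffices h : Coc G ≤ (Coc (primaryPart p G)).comap (phi hE y hy) from h hf
  unfold Coc
  rw [AddSubgroup.closure_le]
  rintro f ⟨K, hK, φ, hf⟩
  change phi hE y hy f ∈ Coc (primaryPart p G)
  rw [mem_Coc_iff]
  change (fun x : primaryPart p G => e • f.1 (x.1 + y)) ∈ CocF _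
  rw [hf]
  have hmem : ∀ x : primaryPart p G, x.1 + y ∈ K → x.1 ∈ K ∧ y ∈ K := by
    intro x hx
    obtain ⟨h1, h2⟩ := hE.decomp x.2 hy
    refine ⟨?_, ?_⟩
    · have := K.zsmul_mem hx e
      rwa [h1] at this
    · have := K.zsmul_mem hx (1 - e)
      rwa [h2] at this
  by_cases hyK : y ∈ K
  · let K' : AddSubgroup (primaryPart p G) :=
      ((QuotientAddGroup.mk' K).comp (primaryPart p G).subtype).ker
    have hK' : ∀ x : primaryPart p G, x ∈ K' ↔ x.1 ∈ K := by
      intro x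
      simp [K', AddMonoidHom.mem_ker]
    let r : K' →+ K :=
      { toFun := fun x => ⟨x.1.1, (hK' x.1).1 x.2⟩
        map_zero' := rfl
        map_add' := fun _ _ => rfl }
    have : (fun x : primaryPart p G => e • cocFun K φ (x.1 + y)) = cocFun K' (e • φ.comp r) := by
      ext x
      by_cases hx : x.1 ∈ K
      · rw [cocFun_pos K φ (K.add_mem hx hyK), cocFun_pos K' _ ((hK' x).2 hx)]
        have h1 : (⟨x.1 + y, K.add_mem hx hyK⟩ : K) = ⟨x.1, hx⟩ + ⟨y, hyK⟩ := rfl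
        have h2 : e • (⟨y, hyK⟩ : K) = 0 := Subtype.ext hy
        rw [h1, map_add, smul_add, ← map_zsmul φ e ⟨y, hyK⟩, h2, map_zero, add_zero]
        rfl
      · rw [cocFun_neg K φ (fun h => hx (hmem x h).1), cocFun_neg K' _ (fun h => hx ((hK' x).1 h)),
          smul_zero]
    rw [this]
    exact cocFun_mem_CocF _ (isAddCyclic_quot_ker _) _
  · have : (fun x : primaryPart p G => e • cocFun K φ (x.1 + y)) = 0 := by
      ext x
      rw [cocFun_neg K φ (fun h => hyK (hmem x h).2), smul_zero]; rfl
    rw [this]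
    exact AddSubgroup.zero_mem _

section
variable {G : Type*} [AddCommGroup G] [Finite G] {p k m : ℕ} {e : ℤ}

lemma card_quot (hE : IsE G p k m e) : ∃ j, Nat.card (primaryPart p G) = p ^ j ∧
    (Nat.card (G ⧸ primaryPart p G)).Coprime p := by
  have hp : Fact p.Prime := ⟨hE.prime⟩
  have h1 : IsPGroup p (Multiplicative (primaryPart p G)) := by
    intro x
    refine ⟨k, ?_⟩
    have := hE.pk_sub x.toAdd
    rw [natCast_zsmul] at this
    exact this
  obtain ⟨j, hj⟩ := IsPGroup.iff_card.1 h1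
  refine ⟨j, hj, ?_⟩
  rw [Nat.coprime_comm, Nat.Prime.coprime_iff_not_dvd hE.prime]
  intro hd
  obtain ⟨x, hx⟩ := exists_prime_addOrderOf_dvd_card' p hd
  obtain ⟨g, rfl⟩ := QuotientAddGroup.mk_surjective x
  have h2 : p • (QuotientAddGroup.mk g : G ⧸ primaryPart p G) = 0 := by
    have := addOrderOf_nsmul_eq_zero (QuotientAddGroup.mk g : G ⧸ primaryPart p G)
    rwa [hx] at this
  rw [← QuotientAddGroup.mk_nsmul, QuotientAddGroup.eq_zero_iff] at h2
  obtain ⟨i, hi⟩ := h2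
  have h3 : g ∈ primaryPart p G := ⟨i + 1, by rw [pow_succ, mul_smul]; exact hi⟩
  rw [← QuotientAddGroup.eq_zero_iff] at h3
  rw [h3, addOrderOf_zero] at hx
  exact hE.prime.one_lt.ne hx

lemma tw_cyc (hE : IsE G p k m e) (L : AddSubgroup (primaryPart p G))
    (hL : IsAddCyclic (primaryPart p G ⧸ L)) (φ : L →+ QZ)
    (H : AddSubgroup (G ⧸ primaryPart p G)) (hH : IsAddCyclic ((G ⧸ primaryPart p G) ⧸ H)) :
    tw hE (indI (H : Set (G ⧸ primaryPart p G))) (cocFun L φ) ∈ CocF G := by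
  have hprod : IsAddCyclic ((primaryPart p G ⧸ L) × ((G ⧸ primaryPart p G) ⧸ H)) := by
    rw [AddGroup.isAddCyclic_prod_iff]
    refine ⟨hL, hH, ?_⟩
    obtain ⟨j, hj, hc⟩ := card_quot hE
    refine Nat.Coprime.of_dvd (AddSubgroup.card_quotient_dvd_card L)
      (AddSubgroup.card_quotient_dvd_card H) ?_
    rw [hj]
    exact (hc.pow_right j).symm
  let F : G →+ (primaryPart p G ⧸ L) × ((G ⧸ primaryPart p G) ⧸ H) :=
    AddMonoidHom.prod ((QuotientAddGroup.mk' L).comp (piP hE))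
      ((QuotientAddGroup.mk' H).comp (QuotientAddGroup.mk' (primaryPart p G)))
  have hK : ∀ g, g ∈ F.ker ↔ piP hE g ∈ L ∧ (QuotientAddGroup.mk g : G ⧸ primaryPart p G) ∈ H := by
    intro g
    simp only [F, AddMonoidHom.mem_ker, AddMonoidHom.prod_apply, Prod.mk_eq_zero,
      AddMonoidHom.comp_apply, QuotientAddGroup.mk'_apply, QuotientAddGroup.eq_zero_iff]
  let r : F.ker →+ L :=
    { toFun := fun g => ⟨piP hE g.1, ((hK g.1).1 g.2).1⟩
      map_zero' := by ext; simp
      map_add' := fun a b => by ext; simp }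
  have : tw hE (indI (H : Set (G ⧸ primaryPart p G))) (cocFun L φ) = cocFun F.ker (φ.comp r) := by
    ext g
    unfold tw
    by_cases h1 : (QuotientAddGroup.mk g : G ⧸ primaryPart p G) ∈ H
    · rw [indI_of_mem h1, one_smul]
      by_cases h2 : piP hE g ∈ L
      · rw [cocFun_pos L φ h2, cocFun_pos F.ker _ ((hK g).2 ⟨h2, h1⟩)]
        rfl
      · rw [cocFun_neg L φ h2, cocFun_neg F.ker _ (fun h => h2 ((hK g).1 h).1)]
    · rw [indI_of_notMem h1, cocFun_neg F.ker _ (fun h => h1 ((hK g).1 h).2), zero_smul]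
  rw [this]
  exact cocFun_mem_CocF _ (isAddCyclic_quot_ker _) _

lemma tw_all (hE : IsE G p k m e) (L : AddSubgroup (primaryPart p G))
    (hL : IsAddCyclic (primaryPart p G ⧸ L)) (φ : L →+ QZ)
    (H : AddSubgroup (G ⧸ primaryPart p G)) :
    tw hE (indI (H : Set (G ⧸ primaryPart p G))) (cocFun L φ) ∈ CocF G := by
  induction H using WellFoundedGT.induction with
  | ind H ih =>
  by_cases hH : IsAddCyclic ((G ⧸ primaryPart p G) ⧸ H)
  · exact tw_cyc hE L hL φ H hH
  obtain ⟨q, hq, hqd, S, M, E, _, hS, hM, hE', hrel⟩ := exists_relation H hH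
  obtain ⟨j, hj, hc⟩ := card_quot hE
  have hqp : q.Coprime p := Nat.Coprime.of_dvd_left hqd hc
  refine mem_of_coprime _ (a := (q : ℤ)) (b := ((p ^ k : ℕ) : ℤ))
    (Nat.isCoprime_iff_coprime.2 (hqp.pow_right k)) ?_ ?_
  · have : (q : ℤ) • tw hE (indI (H : Set (G ⧸ primaryPart p G))) (cocFun L φ) =
        (∑ i, tw hE (indI (S i : Set (G ⧸ primaryPart p G))) (cocFun L φ)) +
          tw hE (indI (M : Set (G ⧸ primaryPart p G))) (cocFun L φ) -
          tw hE (indI (E : Set (G ⧸ primaryPart p G))) (cocFun L φ) := by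
      ext g
      simp only [tw, Pi.smul_apply, Pi.add_apply, Pi.sub_apply, Finset.sum_apply]
      rw [← mul_smul, hrel, sub_smul, add_smul, Finset.sum_smul]
    rw [this]
    exact sub_mem (add_mem (sum_mem fun i _ => ih _ (hS i)) (ih _ hM)) (ih _ hE')
  · have : ((p ^ k : ℕ) : ℤ) • tw hE (indI (H : Set (G ⧸ primaryPart p G))) (cocFun L φ) = 0 := by
      ext g
      simp only [tw, Pi.smul_apply, Pi.zero_apply]
      rw [smul_comm, Hmg_torsion (cocFun_mem L φ) _ _ (hE.pk_sub _), smul_zero]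
    rw [this]
    exact zero_mem _

lemma tw_gen (hE : IsE G p k m e) (L : AddSubgroup (primaryPart p G))
    (hL : IsAddCyclic (primaryPart p G ⧸ L)) (φ : L →+ QZ)
    (C : AddSubgroup (G ⧸ primaryPart p G)) :
    tw hE (indI (genSet C)) (cocFun L φ) ∈ CocF G := by
  classical
  induction C using WellFoundedLT.induction with
  | ind C ih =>
  have := Fintype.ofFinite (AddSubgroup (G ⧸ primaryPart p G))
  have hsum : ∀ x, indI (genSet C) x = indI (C : Set (G ⧸ primaryPart p G)) x -
      ∑ D ∈ Finset.univ.filter (fun D => D < C), indI (genSet D) x := by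
    intro x
    have h1 : ∀ D, indI (genSet D) x = if AddSubgroup.zmultiples x = D then 1 else 0 := by
      intro D
      by_cases h : AddSubgroup.zmultiples x = D
      · rw [if_pos h, indI_of_mem (S := genSet D) h]
      · rw [if_neg h, indI_of_notMem (S := genSet D) h]
    simp only [h1]
    rw [Finset.sum_ite_eq]
    have h2 : x ∈ C ↔ AddSubgroup.zmultiples x ≤ C := by rw [AddSubgroup.zmultiples_le]
    by_cases hxC : x ∈ C
    · rw [indI_of_mem hxC]
      rcases (h2.1 hxC).eq_or_lt with h | h
      · simp [h]
      · simp [h, h.ne]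
    · rw [indI_of_notMem hxC]
      have h3 : ¬ AddSubgroup.zmultiples x ≤ C := fun h => hxC (h2.2 h)
      have h4 : ¬ AddSubgroup.zmultiples x < C := fun h => h3 h.le
      have h5 : ¬ AddSubgroup.zmultiples x = C := fun h => h3 h.le
      simp [h4, h5]
  have : tw hE (indI (genSet C)) (cocFun L φ) =
      tw hE (indI (C : Set (G ⧸ primaryPart p G))) (cocFun L φ) -
      ∑ D ∈ Finset.univ.filter (fun D => D < C), tw hE (indI (genSet D)) (cocFun L φ) := by
    ext g
    simp only [tw, Pi.sub_apply, Finset.sum_apply]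
    rw [hsum, sub_smul, Finset.sum_smul]
  rw [this]
  refine sub_mem (tw_all hE L hL φ C) (sum_mem fun D hD => ih D ?_)
  simpa using hD

lemma psi_Coc (hE : IsE G p k m e) (C : AddSubgroup (G ⧸ primaryPart p G))
    (h : Hmg 1 (primaryPart p G) QZ) (hh : h ∈ Coc (primaryPart p G)) : psi hE C h ∈ Coc G := by
  suffices h : Coc (primaryPart p G) ≤ (Coc G).comap (psi hE C) from h hh
  unfold Coc
  rw [AddSubgroup.closure_le]
  rintro f ⟨L, hL, φ, hf⟩
  change psi hE C f ∈ Coc G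
  rw [mem_Coc_iff]
  change tw hE _ f.1 ∈ _
  rw [hf]
  exact tw_gen hE L hL φ C

/-- representatives -/
lemma exists_rep (hE : IsE G p k m e) (C : {C : AddSubgroup (G ⧸ primaryPart p G) // IsAddCyclic C}) :
    ∃ y : G, e • y = 0 ∧ (QuotientAddGroup.mk y : G ⧸ primaryPart p G) ∈ genSet C.1 := by
  obtain ⟨C, hC⟩ := C
  obtain ⟨c, hc⟩ := C.isAddCyclic_iff_exists_zmultiples_eq_top.1 hC
  obtain ⟨g, rfl⟩ := QuotientAddGroup.mk_surjective c
  refine ⟨(1 - e) • g, ?_, ?_⟩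
  · rw [sub_smul, smul_sub, hE.e_e g (hE.card_smul g), one_smul, sub_self]
  · have h : (QuotientAddGroup.mk (e • g) : G ⧸ primaryPart p G) = 0 :=
      (QuotientAddGroup.eq_zero_iff _).2 (hE.e_mem g)
    rw [sub_smul, one_smul, QuotientAddGroup.mk_sub, h, sub_zero]
    exact hc

open Classical in
lemma phi_psi_same (hE : IsE G p k m e) (C D : AddSubgroup (G ⧸ primaryPart p G)) (y : G)
    (hy : e • y = 0) (hyC : (QuotientAddGroup.mk y : G ⧸ primaryPart p G) ∈ genSet C)
    (h : Hmg 1 (primaryPart p G) QZ) : phi hE y hy (psi hE D h) = if C = D then h else 0 := by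
  ext x
  change e • (indI (genSet D) (QuotientAddGroup.mk (x.1 + y) : G ⧸ primaryPart p G) •
    h.1 (piP hE (x.1 + y))) = _
  have h1 : (QuotientAddGroup.mk (x.1 + y) : G ⧸ primaryPart p G) = QuotientAddGroup.mk y := by
    rw [QuotientAddGroup.mk_add, (QuotientAddGroup.eq_zero_iff _).2 x.2, zero_add]
  have h2 : piP hE (x.1 + y) = x := Subtype.ext (hE.decomp x.2 hy).1
  rw [h1, h2]
  by_cases hCD : C = D
  · subst hCD
    rw [if_pos rfl, indI_of_mem hyC, one_smul]
    exact hE.e_smul_of_pk _ (Hmg_torsion h.2 _ _ (hE.pk_sub _))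
  · rw [if_neg hCD, indI_of_notMem, zero_smul, smul_zero]
    · rfl
    · intro h; exact hCD (hyC.symm.trans h)

lemma psi_phi (hE : IsE G p k m e) (C : AddSubgroup (G ⧸ primaryPart p G)) (y : G)
    (hy : e • y = 0) (hyC : (QuotientAddGroup.mk y : G ⧸ primaryPart p G) ∈ genSet C)
    (f : Hmg 1 G QZ) (g : G) :
    (psi hE C (phi hE y hy f)).1 g =
      indI (genSet C) (QuotientAddGroup.mk g : G ⧸ primaryPart p G) • e • f.1 g := by
  change indI (genSet C) (QuotientAddGroup.mk g : G ⧸ primaryPart p G) •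
    e • f.1 (e • g + y) = _
  by_cases hg : (QuotientAddGroup.mk g : G ⧸ primaryPart p G) ∈ genSet C
  swap
  · rw [indI_of_notMem hg, zero_smul, zero_smul]
  congr 1
  set z := (1 - e) • g with hz
  have hez : e • z = 0 := by
    rw [hz, sub_smul, smul_sub, hE.e_e g (hE.card_smul g), one_smul, sub_self]
  have hzC : (QuotientAddGroup.mk z : G ⧸ primaryPart p G) ∈ genSet C := by
    have h : (QuotientAddGroup.mk (e • g) : G ⧸ primaryPart p G) = 0 :=
      (QuotientAddGroup.eq_zero_iff _).2 (hE.e_mem g)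
    rw [hz, sub_smul, one_smul, QuotientAddGroup.mk_sub, h, sub_zero]
    exact hg
  have hmul : ∀ a b : G, e • a = 0 → e • b = 0 →
      (QuotientAddGroup.mk a : G ⧸ primaryPart p G) ∈ genSet C →
      (QuotientAddGroup.mk b : G ⧸ primaryPart p G) ∈ genSet C → ∃ u : ℤ, a = u • b := by
    intro a b ha hb haC hbC
    have h1 : (QuotientAddGroup.mk a : G ⧸ primaryPart p G) ∈
        AddSubgroup.zmultiples (QuotientAddGroup.mk b : G ⧸ primaryPart p G) := by
      rw [show AddSubgroup.zmultiples (QuotientAddGroup.mk b : G ⧸ primaryPart p G) =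
        AddSubgroup.zmultiples (QuotientAddGroup.mk a : G ⧸ primaryPart p G) from
          hbC.trans haC.symm]
      exact AddSubgroup.mem_zmultiples _
    obtain ⟨u, hu⟩ := h1
    have hu : u • (QuotientAddGroup.mk b : G ⧸ primaryPart p G) = QuotientAddGroup.mk a := hu
    refine ⟨u, ?_⟩
    have h2 : u • b - a ∈ primaryPart p G := by
      rw [← QuotientAddGroup.eq_zero_iff, QuotientAddGroup.mk_sub, QuotientAddGroup.mk_zsmul, hu,
        sub_self]
    have h3 := hE.e_smul_mem h2
    rw [smul_sub, ha, smul_comm, hb, smul_zero, sub_zero, eq_comm, sub_eq_zero] at h3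
    exact h3.symm
  obtain ⟨u, hu⟩ := hmul y z hy hez hyC hzC
  obtain ⟨v, hv⟩ := hmul z y hez hy hzC hyC
  have hcop : IsCoprime u (addOrderOf z : ℤ) := by
    have : (addOrderOf z : ℤ) ∣ v * u - 1 := by
      rw [addOrderOf_dvd_iff_zsmul_eq_zero, sub_smul, mul_smul, ← hu, ← hv, one_smul, sub_self]
    obtain ⟨c, hc⟩ := this
    exact ⟨v, -c, by linear_combination hc⟩
  have := hE.main_smul f.2 g 1 u isCoprime_one_left hcop
  rw [one_smul, one_smul, ← hz, ← hu] at this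
  exact this

end

lemma phi_psi_ne {G : Type*} [AddCommGroup G] [Finite G] {p k m p' k' m' : ℕ} {e e' : ℤ}
    (hE : IsE G p k m e) (hE' : IsE G p' k' m' e') (hpp : p ≠ p')
    (D : AddSubgroup (G ⧸ primaryPart p' G)) (y : G)
    (hy : e • y = 0)
    (h : Hmg 1 (primaryPart p' G) QZ) : phi hE y hy (psi hE' D h) = 0 := by
  ext x
  set z := (psi hE' D h).1 (x.1 + y) with hz
  change e • z = 0
  have h1 : ((p' ^ k' : ℕ) : ℤ) • z = 0 := by
    rw [hz]
    change ((p' ^ k' : ℕ) : ℤ) • (_ • h.1 _) = 0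
    rw [smul_comm, Hmg_torsion h.2 _ _ (hE'.pk_sub _), smul_zero]
  have h2 : ((p ^ k : ℕ) : ℤ) • (e • z) = 0 :=
    hE.pk_smul z (Hmg_torsion (psi hE' D h).2 _ _ (hE.card_smul _))
  refine zero_of_coprime (Nat.isCoprime_iff_coprime.2 ?_) h2 (b := ((p' ^ k' : ℕ) : ℤ)) ?_
  · exact Nat.Coprime.pow _ _ ((Nat.coprime_primes hE.prime hE'.prime).2 hpp)
  · rw [smul_comm, h1, smul_zero]

/-- The idempotent integers. -/
def eI (n p : ℕ) : ℤ :=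
  (ordCompl[p] n : ℕ) * Nat.gcdA (ordCompl[p] n) (ordProj[p] n)

lemma isE_eI (G : Type*) [AddCommGroup G] [Finite G] (p : ℕ) (hp : p.Prime) :
    IsE G p ((Nat.card G).factorization p) (ordCompl[p] (Nat.card G)) (eI (Nat.card G) p) := by
  have hc : p.Coprime (ordCompl[p] (Nat.card G)) := Nat.coprime_ordCompl hp Nat.card_pos.ne'
  refine ⟨hp, (Nat.ordProj_mul_ordCompl_eq_self _ _).symm, hc.pow_left _, hc, ?_, ?_⟩
  · have h := Nat.gcd_eq_gcd_ab (ordCompl[p] (Nat.card G)) (ordProj[p] (Nat.card G))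
    rw [(hc.symm.pow_right _ : Nat.gcd _ _ = 1)] at h
    unfold eI
    refine ⟨- Nat.gcdB (ordCompl[p] (Nat.card G)) (ordProj[p] (Nat.card G)), ?_⟩
    linear_combination -h
  · exact dvd_mul_right _ _

lemma sum_eI (G : Type*) [AddCommGroup G] [Finite G]
    [Fintype {p : ℕ // p.Prime ∧ p ∣ Nat.card G}] :
    ((Nat.card G : ℕ) : ℤ) ∣ (∑ p : {p : ℕ // p.Prime ∧ p ∣ Nat.card G}, eI (Nat.card G) p.1) - 1 := by
  classical
  rw [Int.natCast_dvd, Nat.dvd_iff_prime_pow_dvd_dvd]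
  intro p j hp hj
  rcases Nat.eq_zero_or_pos j with rfl | hj0
  · simp
  rw [← Int.natCast_dvd]
  have hpd : p ∣ Nat.card G := (dvd_pow_self p hj0.ne').trans hj
  have hjk : p ^ j ∣ ordProj[p] (Nat.card G) :=
    pow_dvd_pow p ((hp.pow_dvd_iff_le_factorization Nat.card_pos.ne').1 hj)
  rw [← Finset.add_sum_erase _ _ (Finset.mem_univ ⟨p, hp, hpd⟩)]
  rw [add_sub_right_comm]
  refine dvd_add ?_ (Finset.dvd_sum ?_)
  · exact (Int.natCast_dvd_natCast.2 hjk).trans (isE_eI G p hp).dvd_sub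
  · rintro ⟨q, hq, hqd⟩ hmem
    have hne : q ≠ p := by
      rintro rfl; simp at hmem
    refine Dvd.dvd.trans ?_ (isE_eI G q hq).dvd
    rw [Int.natCast_dvd_natCast]
    have h1 : p ^ j ∣ ordProj[q] (Nat.card G) * ordCompl[q] (Nat.card G) := by
      rw [Nat.ordProj_mul_ordCompl_eq_self]; exact hj
    refine Nat.Coprime.dvd_of_dvd_mul_left ?_ h1
    exact Nat.Coprime.pow _ _ ((Nat.coprime_primes hp hq).2 hne.symm)

theorem stmt18 (G : Type*) [AddCommGroup G] [Finite G] :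
    Nonempty ((↥(Hmg 1 G QZ) ⧸ Coc G) ≃+
      ⨁ p : {p : ℕ // p.Prime ∧ p ∣ Nat.card G},
        (Fin (numCyclic (G ⧸ primaryPart p.1 G)) →
          (↥(Hmg 1 (primaryPart p.1 G) QZ) ⧸ Coc (primaryPart p.1 G)))) := by
  classical
  have hfin : Finite {p : ℕ // p.Prime ∧ p ∣ Nat.card G} := by
    refine Set.Finite.to_subtype (s := {p : ℕ | p.Prime ∧ p ∣ Nat.card G}) ?_
    refine (Set.finite_Iic (Nat.card G)).subset ?_
    rintro p ⟨_, hd⟩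
    exact Nat.le_of_dvd Nat.card_pos hd
  let _ := Fintype.ofFinite {p : ℕ // p.Prime ∧ p ∣ Nat.card G}
  let P := {p : ℕ // p.Prime ∧ p ∣ Nat.card G}
  have hE : ∀ p : P, IsE G p.1 _ _ _ := fun p => isE_eI G p.1 p.2.1
  let ι (p : P) : Fin (numCyclic (G ⧸ primaryPart p.1 G)) ≃
      {C : AddSubgroup (G ⧸ primaryPart p.1 G) // IsAddCyclic C} := (Finite.equivFin _).symm
  choose y hy hyC using fun (p : P) i => exists_rep (hE p) (ι p i)
  let Φ : Hmg 1 G QZ →+ ∀ p : P, (Fin (numCyclic (G ⧸ primaryPart p.1 G)) →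
      (↥(Hmg 1 (primaryPart p.1 G) QZ) ⧸ Coc (primaryPart p.1 G))) :=
    AddMonoidHom.mk' (fun f p i => QuotientAddGroup.mk (phi (hE p) (y p i) (hy p i) f)) (by
      intro f g
      funext p i
      simp only [map_add, QuotientAddGroup.mk_add, Pi.add_apply])
  have hΦ : ∀ f p i, Φ f p i = QuotientAddGroup.mk (phi (hE p) (y p i) (hy p i) f) :=
    fun _ _ _ => rfl
  have hsurj : Function.Surjective Φ := by
    intro t
    choose h hh using fun (p : P) i => QuotientAddGroup.mk_surjective (t p i)
    refine ⟨∑ p : P, ∑ i, psi (hE p) (ι p i).1 (h p i), ?_⟩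
    funext p i
    rw [hΦ, ← hh p i]
    congr 1
    rw [map_sum, Finset.sum_eq_single p]
    · rw [map_sum, Finset.sum_eq_single i]
      · rw [phi_psi_same (hE p) (ι p i).1 _ _ _ (hyC p i), if_pos rfl]
      · intro j _ hj
        rw [phi_psi_same (hE p) (ι p i).1 _ _ _ (hyC p i), if_neg]
        intro heq
        exact hj ((ι p).injective (Subtype.ext heq)).symm
      · simp
    · intro q _ hq
      rw [map_sum]
      refine Finset.sum_eq_zero fun j _ => ?_
      exact phi_psi_ne (hE p) (hE q) (fun h => hq (Subtype.ext h.symm)) _ _ _ _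
    · simp
  have hker : Φ.ker = Coc G := by
    ext f
    rw [AddMonoidHom.mem_ker]
    constructor
    · intro hf
      have hsum : f = ∑ p : P, ∑ i, psi (hE p) (ι p i).1 (phi (hE p) (y p i) (hy p i) f) := by
        ext g
        rw [AddSubgroup.val_finsetSum, Finset.sum_apply]
        have h1 : ∀ p : P, (∑ i, psi (hE p) (ι p i).1 (phi (hE p) (y p i) (hy p i) f) :
            Hmg 1 G QZ).1 g = eI (Nat.card G) p.1 • f.1 g := by
          intro p
          rw [AddSubgroup.val_finsetSum, Finset.sum_apply]
          let C0 : {C : AddSubgroup (G ⧸ primaryPart p.1 G) // IsAddCyclic C} :=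
            ⟨AddSubgroup.zmultiples (QuotientAddGroup.mk g), inferInstance⟩
          rw [Finset.sum_eq_single ((ι p).symm C0)]
          · rw [psi_phi (hE p) _ _ _ (hyC p _), Equiv.apply_symm_apply, indI_of_mem, one_smul]
            rfl
          · intro j _ hj
            rw [psi_phi (hE p) _ _ _ (hyC p _), indI_of_notMem, zero_smul]
            intro h
            apply hj
            rw [Equiv.eq_symm_apply]
            exact Subtype.ext h.symm
          · simp
        have h2 := zsmul_zero_of_dvd (sum_eI G) (Hmg_torsion f.2 g _
          (by rw [natCast_zsmul]; exact card_nsmul_eq_zero'))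
        rw [sub_smul, one_smul, sub_eq_zero, Finset.sum_smul] at h2
        rw [← h2]
        exact Finset.sum_congr rfl fun p _ => (h1 p).symm
      rw [hsum]
      refine sum_mem fun p _ => sum_mem fun i _ => psi_Coc _ _ _ ?_
      rw [← QuotientAddGroup.eq_zero_iff, ← hΦ, hf]
      rfl
    · intro hf
      funext p i
      rw [hΦ]
      exact (QuotientAddGroup.eq_zero_iff _).2 (phi_Coc _ _ _ _ hf)
  exact ⟨((QuotientAddGroup.quotientAddEquivOfEq hker.symm).trans
    (QuotientAddGroup.quotientKerEquivOfSurjective Φ hsurj)).trans (DirectSum.addEquivProd _).symm⟩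

end
end
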